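/- arXiv:2010.04601 — 8 statements merged into one kernel-verified Lean document; each statement's English description precedes it below -/
import Mathlib

section
/- Let E be a set and φ: E × [0,∞) → E a flow with φ(x,0) = x and the semigroup property φ(φ(x,s),t) = φ(x,t+s) for all x ∈ E and s,t ≥ 0. Let w: E → ℝ be absolutely continuous along the flow, in the sense that for every x ∈ E there exists a function g_x: [0,∞) → ℝ, Lebesgue integrable on every bounded interval, with w(φ(x,t)) − w(x) = ∫₀ᵗ g_x(s) ds for all t ≥ 0. Then there exists a single function χ: E → ℝ such that for every x ∈ E and every t ≥ 0 the function s ↦ χ(φ(x,s)) is Lebesgue integrable on [0,t] and w(φ(x,t)) − w(x) = ∫₀ᵗ χ(φ(x,s)) ds. -/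
open MeasureTheory

/-- Paper's Lemma A.2(a): existence of a single "derivative along the flow" function
`χ` for a function `w` which is absolutely continuous along a flow `φ`. -/
theorem exists_chi_of_absolutelyContinuous_along_flow
    {E : Type*} (φ : E → ℝ → E) (w : E → ℝ)
    (hφ0 : ∀ x, φ x 0 = x)
    (hφsemi : ∀ x, ∀ s t : ℝ, 0 ≤ s → 0 ≤ t → φ (φ x s) t = φ x (t + s))
    (hAC : ∀ x : E, ∃ g : ℝ → ℝ,
      (∀ T : ℝ, 0 ≤ T → IntegrableOn g (Set.Icc 0 T) volume) ∧
      ∀ t : ℝ, 0 ≤ t → w (φ x t) - w x = ∫ s in Set.Icc 0 t, g s) :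
    ∃ χ : E → ℝ, ∀ x : E, ∀ t : ℝ, 0 ≤ t →
      IntegrableOn (fun s => χ (φ x s)) (Set.Icc 0 t) volume ∧
      w (φ x t) - w x = ∫ s in Set.Icc 0 t, χ (φ x s) := by
  refine ⟨fun y => derivWithin (fun t => w (φ y t)) (Set.Ici 0) 0, ?_⟩
  intro x t ht
  obtain ⟨g, hg, hw⟩ := hAC x
  have hgi : IntervalIntegrable g volume 0 t :=
    (intervalIntegrable_iff_integrableOn_Icc_of_le ht).2 (hg t ht)
  have key : (fun s => derivWithin (fun r => w (φ (φ x s) r)) (Set.Ici 0) 0)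
      =ᵐ[volume.restrict (Set.Icc 0 t)] g := by
    rw [Filter.EventuallyEq, ae_restrict_iff' measurableSet_Icc]
    filter_upwards [hgi.ae_hasDerivAt_integral] with s hs hst
    have h1 := hs (by rwa [Set.uIcc_of_le ht]) 0 (by rw [Set.uIcc_of_le ht]; exact ⟨le_rfl, ht⟩)
    have h2 : HasDerivAt (fun r : ℝ => (∫ u in (0:ℝ)..(r + s), g u) + w x) (g s) 0 := by
      have h3 : HasDerivAt (fun b : ℝ => ∫ u in (0:ℝ)..b, g u) (g s) (0 + s) := by
        rwa [zero_add]
      exact (h3.comp_add_const 0 s).add_const (w x)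
    have h4 : ∀ r ∈ Set.Ici (0:ℝ),
        w (φ (φ x s) r) = (∫ u in (0:ℝ)..(r + s), g u) + w x := by
      intro r hr
      have hrs : 0 ≤ r + s := add_nonneg hr hst.1
      rw [hφsemi x s r hst.1 hr, intervalIntegral.integral_of_le hrs,
        ← integral_Icc_eq_integral_Ioc, ← hw _ hrs]
      ring
    exact (h2.hasDerivWithinAt.congr h4 (h4 0 (Set.mem_Ici.2 le_rfl))).derivWithin
      (uniqueDiffOn_Ici 0 0 (Set.mem_Ici.2 le_rfl))
  refine ⟨(hg t ht).congr key.symm, ?_⟩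
  rw [hw t ht]
  exact (integral_congr_ae key).symm
end

section
/- Let E be a measurable space and φ: E × [0,∞) → E a flow with φ(x,0) = x and the semigroup property, such that for every fixed t ≥ 0 the map x ↦ φ(x,t) is measurable. Let w: E → ℝ be measurable and absolutely continuous along the flow, i.e., for every x ∈ E there exists a function g_x: [0,∞) → ℝ, Lebesgue integrable on every bounded interval, with w(φ(x,t)) − w(x) = ∫₀ᵗ g_x(s) ds for all t ≥ 0. Then there exists a measurable function χ: E → ℝ such that for every x ∈ E and every t ≥ 0 the function s ↦ χ(φ(x,s)) is Lebesgue integrable on [0,t] and w(φ(x,t)) − w(x) = ∫₀ᵗ χ(φ(x,s)) ds. -/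
open MeasureTheory

/-- Paper's Lemma A.2(b): if moreover `E` is a measurable space, `w` is measurable
and the flow maps `φ(·,t)` are measurable, then the "derivative along the flow"
function `χ` can be chosen measurable. -/
theorem exists_measurable_chi_of_absolutelyContinuous_along_flow
    {E : Type*} [MeasurableSpace E] (φ : E → ℝ → E) (w : E → ℝ)
    (hφ0 : ∀ x, φ x 0 = x)
    (hφsemi : ∀ x, ∀ s t : ℝ, 0 ≤ s → 0 ≤ t → φ (φ x s) t = φ x (t + s))
    (hφmeas : ∀ t : ℝ, 0 ≤ t → Measurable (fun x => φ x t))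
    (hw : Measurable w)
    (hAC : ∀ x : E, ∃ g : ℝ → ℝ,
      (∀ T : ℝ, 0 ≤ T → IntegrableOn g (Set.Icc 0 T) volume) ∧
      ∀ t : ℝ, 0 ≤ t → w (φ x t) - w x = ∫ s in Set.Icc 0 t, g s) :
    ∃ χ : E → ℝ, Measurable χ ∧ ∀ x : E, ∀ t : ℝ, 0 ≤ t →
      IntegrableOn (fun s => χ (φ x s)) (Set.Icc 0 t) volume ∧
      w (φ x t) - w x = ∫ s in Set.Icc 0 t, χ (φ x s) := by
  let h : ℕ → ℝ := fun n => 1 / ((n : ℝ) + 1)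
  have hpos : ∀ n, 0 < h n := fun n => Nat.one_div_pos_of_nat
  have hlim : Filter.Tendsto h Filter.atTop (nhdsWithin 0 (Set.Ioi 0)) :=
    tendsto_nhdsWithin_iff.2 ⟨tendsto_one_div_add_atTop_nhds_zero_nat,
      Filter.Eventually.of_forall hpos⟩
  refine ⟨fun x => Filter.limsup (fun n => (h n)⁻¹ * (w (φ x (h n)) - w x)) Filter.atTop,
    Measurable.limsup fun n =>
      ((hw.comp (hφmeas _ (hpos n).le)).sub hw).const_mul _, ?_⟩
  intro x t ht
  obtain ⟨g, hg, hgw⟩ := hAC x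
  have hF : ∀ y, 0 ≤ y → ∫ s in (0 : ℝ)..y, g s = w (φ x y) - w x := by
    intro y hy
    rw [hgw y hy, intervalIntegral.integral_of_le hy, integral_Icc_eq_integral_Ioc]
  have hint : IntervalIntegrable g volume 0 t :=
    (intervalIntegrable_iff_integrableOn_Icc_of_le ht).2 (hg t ht)
  have key : g =ᵐ[volume.restrict (Set.Icc 0 t)] fun s =>
      Filter.limsup (fun n => (h n)⁻¹ * (w (φ (φ x s) (h n)) - w (φ x s))) Filter.atTop := by
    rw [Filter.EventuallyEq, ae_restrict_iff' measurableSet_Icc]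
    filter_upwards [hint.ae_hasDerivAt_integral] with s hs hst
    rw [Set.uIcc_of_le ht] at hs
    have hd := (hs hst 0 ⟨le_rfl, ht⟩).tendsto_slope_zero_right.comp hlim
    symm
    apply Filter.Tendsto.limsup_eq
    refine hd.congr fun n => ?_
    have h0 := (hpos n).le
    simp only [Function.comp, smul_eq_mul]
    rw [hF _ (add_nonneg hst.1 h0), hF _ hst.1, hφsemi x s (h n) hst.1 h0, add_comm (h n) s]
    ring
  exact ⟨(hg t ht).congr key, (hgw t ht).trans (integral_congr_ae key)⟩
end

section
/- Let m be a finite Borel measure on ℝ. Then for all τ, t ∈ ℝ: t · m([τ, τ+t]) = ∫_{(0,t]} m([τ, τ+s)) ds + ∫_{(τ, τ+t]} (s − τ) dm(s), where the first integral is with respect to Lebesgue measure and the second with respect to m. -/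
open MeasureTheory

/-- First identity of the paper's Lemma A.4: for a finite Borel measure `m` on `ℝ`
and all `τ, t ∈ ℝ`,
`t · m([τ, τ+t]) = ∫_{(0,t]} m([τ, τ+s)) ds + ∫_{(τ, τ+t]} (s − τ) dm(s)`. -/
theorem finite_measure_interval_identity_closed
    (m : Measure ℝ) [IsFiniteMeasure m] (τ t : ℝ) :
    t * (m (Set.Icc τ (τ + t))).toReal
      = (∫ s in Set.Ioc (0 : ℝ) t, (m (Set.Ico τ (τ + s))).toReal)
        + ∫ s in Set.Ioc τ (τ + t), (s - τ) ∂m := by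
  rcases le_or_gt t 0 with ht | ht
  · have h1 : Set.Ioc (0 : ℝ) t = ∅ := Set.Ioc_eq_empty (by linarith)
    have h2 : Set.Ioc τ (τ + t) = ∅ := Set.Ioc_eq_empty (by linarith)
    rw [h1, h2]
    rcases ht.lt_or_eq with h | h
    · have h3 : Set.Icc τ (τ + t) = ∅ := Set.Icc_eq_empty (by linarith)
      simp [h3]
    · simp [h]
  have hint : Integrable (fun s => s - τ) (m.restrict (Set.Ioc τ (τ + t))) := by
    have : IntegrableOn (fun s => s - τ) (Set.Icc τ (τ + t)) m :=
      (by fun_prop : Continuous (fun s : ℝ => s - τ)).continuousOn.integrableOn_Icc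
    exact this.mono_set Set.Ioc_subset_Icc_self
  have key := hint.integral_eq_integral_Ioc_meas_le (M := t)
    (by
      filter_upwards [ae_restrict_mem measurableSet_Ioc] with s hs
      simpa using hs.1.le)
    (by
      filter_upwards [ae_restrict_mem measurableSet_Ioc] with s hs
      have := hs.2
      linarith)
  have hset : ∀ a ∈ Set.Ioc (0 : ℝ) t,
      (m.restrict (Set.Ioc τ (τ + t))).real {s | a ≤ s - τ}
        = (m (Set.Icc τ (τ + t))).toReal - (m (Set.Ico τ (τ + a))).toReal := by
    intro a ha
    have hm : MeasurableSet {s : ℝ | a ≤ s - τ} :=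
      measurableSet_le measurable_const (by fun_prop)
    rw [measureReal_restrict_apply hm]
    have e : {s : ℝ | a ≤ s - τ} ∩ Set.Ioc τ (τ + t)
        = Set.Icc τ (τ + t) \ Set.Ico τ (τ + a) := by
      ext x
      have h1 := ha.1
      simp only [Set.mem_inter_iff, Set.mem_setOf_eq, Set.mem_Ioc, Set.mem_diff, Set.mem_Icc,
        Set.mem_Ico, not_and, not_lt]
      constructor
      · rintro ⟨h, h', h''⟩
        exact ⟨⟨h'.le, h''⟩, fun _ => by linarith⟩
      · rintro ⟨⟨h, h'⟩, h''⟩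
        have := h'' h
        exact ⟨by linarith, by linarith, h'⟩
    rw [e]
    refine measureReal_diff ?_ measurableSet_Ico
    intro x hx
    exact ⟨hx.1, by have := hx.2; have := ha.2; linarith⟩
  have hmono : Monotone (fun s : ℝ => (m (Set.Ico τ (τ + s))).toReal) := by
    intro a b hab
    exact measureReal_mono (Set.Ico_subset_Ico_right (by linarith))
  have hi : IntegrableOn (fun s : ℝ => (m (Set.Ico τ (τ + s))).toReal) (Set.Ioc 0 t) :=
    ((hmono.monotoneOn _).integrableOn_isCompact isCompact_Icc).mono_set Set.Ioc_subset_Icc_self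
  rw [key, setIntegral_congr_fun measurableSet_Ioc hset, integral_sub _ hi]
  · simp [ht.le]
  · simp
end

section
/- Let m be a finite Borel measure on ℝ. Then for all τ, t ∈ ℝ: t · m([τ, τ+t)) = ∫_{[0,t)} m([τ, τ+s)) ds + ∫_{[τ, τ+t)} (s − τ) dm(s), where the first integral is with respect to Lebesgue measure and the second with respect to m. -/
open MeasureTheory

/-- Second identity of the paper's Lemma A.4: for a finite Borel measure `m` on `ℝ`
and all `τ, t ∈ ℝ`,
`t · m([τ, τ+t)) = ∫_{[0,t)} m([τ, τ+s)) ds + ∫_{[τ, τ+t)} (s − τ) dm(s)`. -/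
theorem finite_measure_interval_identity_halfopen
    (m : Measure ℝ) [IsFiniteMeasure m] (τ t : ℝ) :
    t * (m (Set.Ico τ (τ + t))).toReal
      = (∫ s in Set.Ico (0 : ℝ) t, (m (Set.Ico τ (τ + s))).toReal)
        + ∫ s in Set.Ico τ (τ + t), (s - τ) ∂m := by
  rcases le_or_gt t 0 with ht | ht
  · have h1 : Set.Ico τ (τ + t) = ∅ := Set.Ico_eq_empty (by linarith)
    have h2 : Set.Ico 0 t = ∅ := Set.Ico_eq_empty (by linarith)
    simp [h1, h2]
  set S : Set (ℝ × ℝ) := {p | p.2 < τ + p.1} with hS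
  have hSm : MeasurableSet S :=
    measurableSet_lt measurable_snd (measurable_const.add measurable_fst)
  have key := integral_integral_swap (μ := volume.restrict (Set.Ico (0 : ℝ) t))
    (ν := m.restrict (Set.Ico τ (τ + t)))
    (f := fun s u => S.indicator (fun _ => (1 : ℝ)) (s, u))
    ((integrable_const (1 : ℝ)).indicator hSm)
  have hL : (∫ s in Set.Ico (0 : ℝ) t, (m (Set.Ico τ (τ + s))).toReal)
      = ∫ s in Set.Ico (0 : ℝ) t, ∫ u in Set.Ico τ (τ + t),
          S.indicator (fun _ => (1 : ℝ)) (s, u) ∂m := by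
    refine setIntegral_congr_fun measurableSet_Ico fun s hs => ?_
    have e : (fun u => S.indicator (fun _ => (1 : ℝ)) (s, u))
        = (Set.Iio (τ + s)).indicator (fun _ => (1 : ℝ)) := by
      ext u; simp [Set.indicator, hS]
    have e2 : Set.Iio (τ + s) ∩ Set.Ico τ (τ + t) = Set.Ico τ (τ + s) := by
      ext u; simp only [Set.mem_inter_iff, Set.mem_Iio, Set.mem_Ico] at *
      constructor
      · rintro ⟨a, b, c⟩; exact ⟨b, a⟩
      · rintro ⟨a, b⟩; exact ⟨b, a, by linarith [hs.2]⟩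
    simp only [e]
    rw [integral_indicator measurableSet_Iio, Measure.restrict_restrict measurableSet_Iio, e2]
    simp [Measure.real]
  have hR : (∫ u in Set.Ico τ (τ + t), (∫ s in Set.Ico (0 : ℝ) t,
          S.indicator (fun _ => (1 : ℝ)) (s, u)) ∂m)
      = ∫ u in Set.Ico τ (τ + t), (t - (u - τ)) ∂m := by
    refine setIntegral_congr_fun measurableSet_Ico fun u hu => ?_
    have e : (fun s => S.indicator (fun _ => (1 : ℝ)) (s, u))
        = (Set.Ioi (u - τ)).indicator (fun _ => (1 : ℝ)) := by
      ext s; simp [Set.indicator, hS, sub_lt_iff_lt_add']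
    have e2 : Set.Ioi (u - τ) ∩ Set.Ico 0 t = Set.Ioo (u - τ) t := by
      ext s; simp only [Set.mem_inter_iff, Set.mem_Ioi, Set.mem_Ico, Set.mem_Ioo] at *
      constructor
      · rintro ⟨a, b, c⟩; exact ⟨a, c⟩
      · rintro ⟨a, b⟩; exact ⟨a, by linarith [hu.1], b⟩
    simp only [e]
    rw [integral_indicator measurableSet_Ioi, Measure.restrict_restrict measurableSet_Ioi, e2]
    have : 0 ≤ t - (u - τ) := by linarith [hu.2]
    simp [Measure.real, ENNReal.toReal_ofReal this]
  have hi : IntegrableOn (fun u => u - τ) (Set.Ico τ (τ + t)) m :=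
    ((continuous_id.sub continuous_const).continuousOn.integrableOn_compact
      (isCompact_Icc (a := τ) (b := τ + t))).mono_set Set.Ico_subset_Icc_self
  rw [hL, key, hR, integral_sub (integrable_const t) hi]
  simp [Measure.real, mul_comm]
end

section
/- Let (X̃, ρ̃) be a metric space and φ̃: X̃ × [0,∞) → X̃ a continuous flow with φ̃(x̃,0) = x̃, the semigroup property, and disjoint orbits. Let X := {(ỹ,t) ∈ X̃ × [0,∞) : ỹ = φ̃(x̃,t) for some x̃}, with the subspace topology of X̃ × [0,∞), and assume there exists d: [0,∞) → (0,∞), bounded on every bounded interval, such that ρ̃(h(y₁), h(y₂)) ≤ max(d(t₁), d(t₂)) · ρ(y₁, y₂) for all y₁ = (ỹ₁,t₁), y₂ = (ỹ₂,t₂) ∈ X, where h: X → X̃ is the unique-starting-point map and ρ is a compatible metric on X̃ × [0,∞). Then the map F(x̃,t) := (φ̃(x̃,t), t) is a homeomorphism from X̃ × [0,∞) onto X, with inverse F⁻¹(ỹ,t) = (h(ỹ,t), t). -/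
open scoped NNReal

def flowOrbit {Xt : Type*} (φ : Xt → ℝ≥0 → Xt) (x : Xt) : Set (Xt × ℝ≥0) :=
  {p : Xt × ℝ≥0 | ∃ t : ℝ≥0, p = (φ x t, t)}

def flowReachable {Xt : Type*} (φ : Xt → ℝ≥0 → Xt) : Set (Xt × ℝ≥0) :=
  {p : Xt × ℝ≥0 | ∃ x : Xt, p.1 = φ x p.2}

/-- Homeomorphism statement of Lemma 4.5: under the disjoint-orbit condition and
the metric bound of Condition 4.4, the map `F(x̃,t) := (φ̃(x̃,t), t)` is a
homeomorphism from `X̃ × [0,∞)` onto the reachable set `X`, with inverse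
`F⁻¹(ỹ,t) = (h(ỹ,t), t)`. -/
theorem flow_map_homeomorph
    {Xt : Type*} [MetricSpace Xt] (φ : Xt → ℝ≥0 → Xt)
    (hφc : Continuous (fun p : Xt × ℝ≥0 => φ p.1 p.2))
    (hφ0 : ∀ x, φ x 0 = x)
    (hφsemi : ∀ (x : Xt) (s t : ℝ≥0), φ (φ x s) t = φ x (t + s))
    (hdisj : ∀ x₁ x₂ : Xt, x₁ ≠ x₂ → Disjoint (flowOrbit φ x₁) (flowOrbit φ x₂))
    (h : flowReachable φ → Xt)
    (hh : ∀ y : flowReachable φ, φ (h y) (y : Xt × ℝ≥0).2 = (y : Xt × ℝ≥0).1)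
    (ρ : Xt × ℝ≥0 → Xt × ℝ≥0 → ℝ)
    (hρ_self : ∀ p, ρ p p = 0)
    (hρ_eq : ∀ p q, ρ p q = 0 → p = q)
    (hρ_symm : ∀ p q, ρ p q = ρ q p)
    (hρ_tri : ∀ p q r, ρ p r ≤ ρ p q + ρ q r)
    (hρ_compat : ∀ s : Set (Xt × ℝ≥0),
      IsOpen s ↔ ∀ p ∈ s, ∃ ε > 0, ∀ q, ρ p q < ε → q ∈ s)
    (d : ℝ≥0 → ℝ) (hd_pos : ∀ t, 0 < d t)
    (hd_bdd : ∀ T : ℝ≥0, ∃ M : ℝ, ∀ t ≤ T, d t ≤ M)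
    (hbound : ∀ y₁ y₂ : flowReachable φ,
      dist (h y₁) (h y₂)
        ≤ max (d (y₁ : Xt × ℝ≥0).2) (d (y₂ : Xt × ℝ≥0).2) * ρ (y₁ : Xt × ℝ≥0) (y₂ : Xt × ℝ≥0)) :
    ∃ e : (Xt × ℝ≥0) ≃ₜ flowReachable φ,
      (∀ q : Xt × ℝ≥0, ((e q : flowReachable φ) : Xt × ℝ≥0) = (φ q.1 q.2, q.2)) ∧
      (∀ y : flowReachable φ, e.symm y = ((h y, (y : Xt × ℝ≥0).2) : Xt × ℝ≥0)) := by
  have hinj : ∀ (x₁ x₂ : Xt) (t : ℝ≥0), φ x₁ t = φ x₂ t → x₁ = x₂ := by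
    intro x₁ x₂ t ht
    by_contra hne
    have hm : (φ x₁ t, t) ∈ flowOrbit φ x₁ := ⟨t, rfl⟩
    refine Set.disjoint_left.mp (hdisj x₁ x₂ hne) hm ⟨t, ?_⟩
    rw [ht]
  have hcont : Continuous h := by
    rw [continuous_iff_continuousAt]
    intro y₀
    rw [ContinuousAt, Metric.tendsto_nhds]
    intro ε hε
    obtain ⟨M, hM⟩ := hd_bdd ((y₀ : Xt × ℝ≥0).2 + 1)
    have hM0 : 0 < M := lt_of_lt_of_le (hd_pos _) (hM (y₀ : Xt × ℝ≥0).2 (by simp))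
    have hopen : IsOpen {q : Xt × ℝ≥0 | ρ (y₀ : Xt × ℝ≥0) q < ε / M} := by
      rw [hρ_compat]
      intro p hp
      have hp' : ρ (y₀ : Xt × ℝ≥0) p < ε / M := hp
      refine ⟨ε / M - ρ (y₀ : Xt × ℝ≥0) p, by linarith, ?_⟩
      intro q hq
      have := hρ_tri (y₀ : Xt × ℝ≥0) p q
      show ρ (y₀ : Xt × ℝ≥0) q < ε / M
      linarith
    have h1 : ∀ᶠ y : flowReachable φ in nhds y₀,
        ρ (y₀ : Xt × ℝ≥0) (y : Xt × ℝ≥0) < ε / M :=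
      (hopen.preimage continuous_subtype_val).mem_nhds
        (by show ρ (y₀ : Xt × ℝ≥0) (y₀ : Xt × ℝ≥0) < ε / M
            rw [hρ_self]; positivity)
    have h2 : ∀ᶠ y : flowReachable φ in nhds y₀,
        (y : Xt × ℝ≥0).2 < (y₀ : Xt × ℝ≥0).2 + 1 :=
      ((continuous_snd.comp continuous_subtype_val).tendsto y₀).eventually
        (gt_mem_nhds (by simp))
    filter_upwards [h1, h2] with y hy1 hy2
    have hb := hbound y y₀
    rw [hρ_symm] at hb
    have hmax : max (d (y : Xt × ℝ≥0).2) (d (y₀ : Xt × ℝ≥0).2) ≤ M :=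
      max_le (hM _ hy2.le) (hM _ (by simp))
    have hpos : 0 ≤ ρ (y₀ : Xt × ℝ≥0) (y : Xt × ℝ≥0) := by
      have := hρ_tri (y₀ : Xt × ℝ≥0) (y : Xt × ℝ≥0) (y₀ : Xt × ℝ≥0)
      rw [hρ_self, hρ_symm (y : Xt × ℝ≥0)] at this
      linarith
    calc dist (h y) (h y₀) ≤ _ := hb
      _ ≤ M * ρ (y₀ : Xt × ℝ≥0) (y : Xt × ℝ≥0) := mul_le_mul_of_nonneg_right hmax hpos
      _ < ε := by rwa [mul_comm, ← lt_div_iff₀ hM0]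
  refine ⟨{ toFun := fun q => ⟨(φ q.1 q.2, q.2), ⟨q.1, rfl⟩⟩
            invFun := fun y => (h y, (y : Xt × ℝ≥0).2)
            left_inv := ?_
            right_inv := ?_
            continuous_toFun := (hφc.prodMk continuous_snd).subtype_mk _
            continuous_invFun :=
              hcont.prodMk (continuous_snd.comp continuous_subtype_val) },
          fun q => rfl, fun y => rfl⟩
  · intro q
    exact Prod.ext (hinj _ _ q.2 (hh ⟨(φ q.1 q.2, q.2), ⟨q.1, rfl⟩⟩)) rfl
  · intro y
    exact Subtype.ext (Prod.ext (hh y) rfl)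
end

section
/- Let X̃ be a Polish space (separable, completely metrizable) with compatible metric ρ̃, and φ̃: X̃ × [0,∞) → X̃ a continuous flow with φ̃(x̃,0) = x̃, the semigroup property, and disjoint orbits. Assume there exists d: [0,∞) → (0,∞), bounded on every bounded interval, such that ρ̃(h(y₁), h(y₂)) ≤ max(d(t₁), d(t₂)) · ρ(y₁, y₂) for all y₁ = (ỹ₁,t₁), y₂ = (ỹ₂,t₂) in X := {(ỹ,t) : ỹ = φ̃(x̃,t) for some x̃}, where h is the unique-starting-point map and ρ is a compatible metric on X̃ × [0,∞). Then X is a Borel-measurable subset of X̃ × [0,∞). -/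
open scoped NNReal

/-- Borel-ness of the reachable set `X` asserted in Lemma 4.5: for a Polish space
`X̃` (with compatible metric `ρ̃ = dist`), a continuous flow with disjoint orbits
satisfying the metric bound of Condition 4.4, the set `X` of points reachable by
the flow is a Borel subset of `X̃ × [0,∞)`. -/
theorem flowReachable_measurableSet
    {Xt : Type*} [MetricSpace Xt] [PolishSpace Xt] (φ : Xt → ℝ≥0 → Xt)
    (hφc : Continuous (fun p : Xt × ℝ≥0 => φ p.1 p.2))
    (hφ0 : ∀ x, φ x 0 = x)
    (hφsemi : ∀ (x : Xt) (s t : ℝ≥0), φ (φ x s) t = φ x (t + s))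
    (hdisj : ∀ x₁ x₂ : Xt, x₁ ≠ x₂ → Disjoint (flowOrbit φ x₁) (flowOrbit φ x₂))
    (h : flowReachable φ → Xt)
    (hh : ∀ y : flowReachable φ, φ (h y) (y : Xt × ℝ≥0).2 = (y : Xt × ℝ≥0).1)
    (ρ : Xt × ℝ≥0 → Xt × ℝ≥0 → ℝ)
    (hρ_self : ∀ p, ρ p p = 0)
    (hρ_eq : ∀ p q, ρ p q = 0 → p = q)
    (hρ_symm : ∀ p q, ρ p q = ρ q p)
    (hρ_tri : ∀ p q r, ρ p r ≤ ρ p q + ρ q r)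
    (hρ_compat : ∀ s : Set (Xt × ℝ≥0),
      IsOpen s ↔ ∀ p ∈ s, ∃ ε > 0, ∀ q, ρ p q < ε → q ∈ s)
    (d : ℝ≥0 → ℝ) (hd_pos : ∀ t, 0 < d t)
    (hd_bdd : ∀ T : ℝ≥0, ∃ M : ℝ, ∀ t ≤ T, d t ≤ M)
    (hbound : ∀ y₁ y₂ : flowReachable φ,
      dist (h y₁) (h y₂)
        ≤ max (d (y₁ : Xt × ℝ≥0).2) (d (y₂ : Xt × ℝ≥0).2) * ρ (y₁ : Xt × ℝ≥0) (y₂ : Xt × ℝ≥0)) :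
    @MeasurableSet _ (borel (Xt × ℝ≥0)) (flowReachable φ) := by
  let F : Xt × ℝ≥0 → Xt × ℝ≥0 := fun p => (φ p.1 p.2, p.2)
  have hFc : Continuous F := hφc.prodMk continuous_snd
  have hFi : Function.Injective F := by
    rintro ⟨x₁, t₁⟩ ⟨x₂, t₂⟩ heq
    obtain ⟨h1, h2⟩ := Prod.mk.inj heq
    simp only at h1 h2
    subst h2
    by_contra hne
    have hx : x₁ ≠ x₂ := fun hx => hne (by rw [hx])
    have hm1 : (φ x₁ t₁, t₁) ∈ flowOrbit φ x₁ := ⟨t₁, rfl⟩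
    have hm2 : (φ x₁ t₁, t₁) ∈ flowOrbit φ x₂ := ⟨t₁, by rw [h1]⟩
    exact Set.disjoint_left.mp (hdisj x₁ x₂ hx) hm1 hm2
  have hr : flowReachable φ = Set.range F := by
    ext ⟨y, t⟩
    constructor
    · rintro ⟨x, hx⟩
      exact ⟨(x, t), Prod.ext hx.symm rfl⟩
    · rintro ⟨⟨x, s⟩, hx⟩
      obtain ⟨h1, h2⟩ := Prod.mk.inj hx
      simp only at h1 h2
      subst h2
      exact ⟨x, h1.symm⟩
  have hP : PolishSpace ℝ≥0 := (isClosed_Ici (a := (0 : ℝ))).polishSpace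
  rw [hr]
  letI : MeasurableSpace (Xt × ℝ≥0) := borel (Xt × ℝ≥0)
  haveI : BorelSpace (Xt × ℝ≥0) := ⟨rfl⟩
  exact MeasureTheory.measurableSet_range_of_continuous_injective hFc hFi
end

section
/- Let (α, 𝒜) be a measurable space, let L₁ and L₂ be finite measures on α, and let g₁, g₂: α × [0,∞) → [0,∞) be bounded jointly measurable functions. For i = 1,2 define the measure νᵢ on α × [0,∞) by νᵢ(A) := ∫_α ∫₀^∞ 1_A(a,u) gᵢ(a,u) du Lᵢ(da) for measurable A ⊆ α × [0,∞) (du is Lebesgue measure). Assume ν₂(A) ≤ ν₁(A) for every measurable A. Then there exist a finite measure L on α and a bounded measurable function g: α × [0,∞) → [0,∞) such that ν₁(A) = ν₂(A) + ∫_α ∫₀^∞ 1_A(a,u) g(a,u) du L(da) for every measurable A ⊆ α × [0,∞); i.e., the difference ν₁ − ν₂ again has a bounded density with respect to a product of a finite measure and Lebesgue measure. -/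
open MeasureTheory
open scoped ENNReal NNReal

theorem nmd_density {α : Type*} [MeasurableSpace α] (μ L : Measure α) [IsFiniteMeasure μ]
    [IsFiniteMeasure L] (h : μ ≤ L) :
    ∃ d : α → ℝ≥0∞, Measurable d ∧ (∀ a, d a ≤ 1) ∧ μ = L.withDensity d := by
  refine ⟨fun a => min (μ.rnDeriv L a) 1, (Measure.measurable_rnDeriv μ L).min measurable_const,
    fun a => min_le_right _ _, ?_⟩
  have hac : μ ≪ L := Measure.absolutelyContinuous_of_le h
  conv_lhs => rw [← Measure.withDensity_rnDeriv_eq μ L hac]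
  apply withDensity_congr_ae
  filter_upwards [Measure.rnDeriv_le_one_of_le h] with a ha
  exact (min_eq_left ha).symm

theorem nmd_prod {α : Type*} [MeasurableSpace α] (L : Measure α) [IsFiniteMeasure L]
    (d : α → ℝ≥0∞) (hd : Measurable d) (g : α × ℝ → ℝ≥0∞) (hg : Measurable g)
    (A : Set (α × ℝ)) (hA : MeasurableSet A) :
    (∫⁻ a, (∫⁻ u in Set.Ici (0 : ℝ), Set.indicator A g (a, u)) ∂(L.withDensity d))
      = ∫⁻ q in A, d q.1 * g q ∂(L.prod (volume.restrict (Set.Ici (0 : ℝ)))) := by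
  have hi : Measurable (A.indicator g) := hg.indicator hA
  have hdg : Measurable fun q : α × ℝ => d q.1 * g q := (hd.comp measurable_fst).mul hg
  rw [lintegral_withDensity_eq_lintegral_mul _ hd hi.lintegral_prod_right',
    ← lintegral_indicator hA, lintegral_prod _
      (hdg.indicator hA).aemeasurable]
  refine lintegral_congr fun a => ?_
  have hs : Measurable fun u : ℝ => A.indicator g (a, u) := hi.comp measurable_prodMk_left
  rw [Pi.mul_apply, ← lintegral_const_mul _ hs]
  refine lintegral_congr fun u => ?_
  by_cases h : (a, u) ∈ A <;> simp [h]

/-- Part (b) of Lemma 4.10, in the coordinates of Definition 4.9: if two "normal"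
measures (those of the form `g(a,u) du L(da)` with `L` finite and `g` bounded
measurable) satisfy `ν₂ ≤ ν₁` set-wise, then their difference is again normal. -/
theorem normal_measure_difference
    {α : Type*} [MeasurableSpace α]
    (L₁ L₂ : Measure α) [IsFiniteMeasure L₁] [IsFiniteMeasure L₂]
    (g₁ g₂ : α × ℝ → ℝ≥0∞) (hm₁ : Measurable g₁) (hm₂ : Measurable g₂)
    (C₁ C₂ : ℝ≥0) (hb₁ : ∀ q, g₁ q ≤ C₁) (hb₂ : ∀ q, g₂ q ≤ C₂)
    (hle : ∀ A : Set (α × ℝ), MeasurableSet A →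
      (∫⁻ a, (∫⁻ u in Set.Ici (0 : ℝ), Set.indicator A g₂ (a, u)) ∂L₂)
        ≤ ∫⁻ a, (∫⁻ u in Set.Ici (0 : ℝ), Set.indicator A g₁ (a, u)) ∂L₁) :
    ∃ (L : Measure α) (g : α × ℝ → ℝ≥0∞),
      IsFiniteMeasure L ∧ Measurable g ∧ (∃ C : ℝ≥0, ∀ q, g q ≤ C) ∧
      ∀ A : Set (α × ℝ), MeasurableSet A →
        (∫⁻ a, (∫⁻ u in Set.Ici (0 : ℝ), Set.indicator A g₁ (a, u)) ∂L₁)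
          = (∫⁻ a, (∫⁻ u in Set.Ici (0 : ℝ), Set.indicator A g₂ (a, u)) ∂L₂)
            + ∫⁻ a, (∫⁻ u in Set.Ici (0 : ℝ), Set.indicator A g (a, u)) ∂L := by
  obtain ⟨d₁, hd₁, hd₁1, e₁⟩ := nmd_density L₁ (L₁ + L₂) (Measure.le_add_right le_rfl)
  obtain ⟨d₂, hd₂, -, e₂⟩ := nmd_density L₂ (L₁ + L₂) (Measure.le_add_left le_rfl)
  generalize hL : L₁ + L₂ = L at *
  haveI : IsFiniteMeasure L := hL ▸ inferInstance
  clear hL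
  subst e₁ e₂
  have hh₁ : Measurable fun q : α × ℝ => d₁ q.1 * g₁ q := (hd₁.comp measurable_fst).mul hm₁
  have hh₂ : Measurable fun q : α × ℝ => d₂ q.1 * g₂ q := (hd₂.comp measurable_fst).mul hm₂
  have hae : (fun q : α × ℝ => d₂ q.1 * g₂ q)
      ≤ᵐ[L.prod (volume.restrict (Set.Ici (0 : ℝ)))] fun q => d₁ q.1 * g₁ q := by
    refine ae_le_of_forall_setLIntegral_le_of_sigmaFinite hh₂ fun A hA _ => ?_
    have := hle A hA
    rwa [nmd_prod L d₂ hd₂ g₂ hm₂ A hA, nmd_prod L d₁ hd₁ g₁ hm₁ A hA] at this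
  refine ⟨L, fun q => d₁ q.1 * g₁ q - d₂ q.1 * g₂ q, inferInstance, hh₁.sub hh₂, ⟨C₁, fun q => ?_⟩,
    fun A hA => ?_⟩
  · refine tsub_le_self.trans ?_
    calc d₁ q.1 * g₁ q ≤ 1 * C₁ := mul_le_mul' (hd₁1 _) (hb₁ q)
      _ = C₁ := one_mul _
  · have key := nmd_prod L (fun _ => 1) measurable_const _ (hh₁.sub hh₂) A hA
    have h1 : L.withDensity (fun _ => (1 : ℝ≥0∞)) = L := withDensity_one
    rw [h1] at key
    simp only [one_mul] at key
    refine (nmd_prod L d₁ hd₁ g₁ hm₁ A hA).trans ?_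
    refine Eq.trans ?_ (congrArg₂ (· + ·) (nmd_prod L d₂ hd₂ g₂ hm₂ A hA) key).symm
    refine Eq.trans ?_ (lintegral_add_left hh₂ _)
    refine lintegral_congr_ae (ae_restrict_of_ae ?_)
    filter_upwards [hae] with q hq
    exact (add_tsub_cancel_of_le hq).symm
end

section
/- Let m be a finite Borel measure on [0,∞) and c ∈ [0,∞). Define G(t) := c · m([0,t]) and u* := inf{ t ∈ [0,∞) : G(t) ≥ 1 }, and assume u* < ∞. Then: (i) c · m([0,u*]) ≥ 1 and c · m([0,u*)) ≤ 1; and (ii) the measure p on [0,∞) defined by p(I) := c · m(I ∩ [0,u*)) + (1 − c · m([0,u*))) · 1{u* ∈ I} for Borel sets I is a probability measure satisfying p(I) ≤ c · m(I) for every Borel set I ⊆ [0,∞). -/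
open MeasureTheory
open scoped ENNReal NNReal

/-- The threshold time `u* := inf{ t ≥ 0 : c · m([0,t]) ≥ 1 }`. -/
noncomputable def uStar (m : Measure ℝ) (c : ℝ≥0) : ℝ :=
  sInf {t : ℝ | 0 ≤ t ∧ 1 ≤ (c : ℝ≥0∞) * m (Set.Icc 0 t)}

/-- The construction and domination property of the stopping kernel (parts (i) and
(iii) of the proof of Lemma 6.4, restricted to a single orbit): with
`G(t) := c·m([0,t])` and `u* := inf{t ≥ 0 : G(t) ≥ 1} < ∞`, one has
`c·m([0,u*]) ≥ 1`, `c·m([0,u*)) ≤ 1`, and the measure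
`p(I) := c·m(I ∩ [0,u*)) + (1 − c·m([0,u*)))·1{u* ∈ I}` is a probability
measure with `p(I) ≤ c·m(I)` for every Borel set `I`. -/
theorem stopping_kernel_construction
    (m : Measure ℝ) [IsFiniteMeasure m] (hm0 : m (Set.Iio (0 : ℝ)) = 0)
    (c : ℝ≥0)
    (hne : {t : ℝ | 0 ≤ t ∧ 1 ≤ (c : ℝ≥0∞) * m (Set.Icc 0 t)}.Nonempty) :
    (1 ≤ (c : ℝ≥0∞) * m (Set.Icc 0 (uStar m c)) ∧
      (c : ℝ≥0∞) * m (Set.Ico 0 (uStar m c)) ≤ 1) ∧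
    IsProbabilityMeasure
      ((c : ℝ≥0∞) • m.restrict (Set.Ico 0 (uStar m c))
        + (1 - (c : ℝ≥0∞) * m (Set.Ico 0 (uStar m c))) • Measure.dirac (uStar m c)) ∧
    (∀ I : Set ℝ, MeasurableSet I →
      ((c : ℝ≥0∞) • m.restrict (Set.Ico 0 (uStar m c))
        + (1 - (c : ℝ≥0∞) * m (Set.Ico 0 (uStar m c))) • Measure.dirac (uStar m c)) I
        = (c : ℝ≥0∞) * m (I ∩ Set.Ico 0 (uStar m c))
          + (1 - (c : ℝ≥0∞) * m (Set.Ico 0 (uStar m c)))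
            * Set.indicator I (fun _ => (1 : ℝ≥0∞)) (uStar m c)) ∧
    (∀ I : Set ℝ, MeasurableSet I →
      ((c : ℝ≥0∞) • m.restrict (Set.Ico 0 (uStar m c))
        + (1 - (c : ℝ≥0∞) * m (Set.Ico 0 (uStar m c))) • Measure.dirac (uStar m c)) I
        ≤ (c : ℝ≥0∞) * m I) := by
  obtain ⟨h1, h2⟩ : 1 ≤ (c : ℝ≥0∞) * m (Set.Icc 0 (uStar m c)) ∧
      (c : ℝ≥0∞) * m (Set.Ico 0 (uStar m c)) ≤ 1 := by
    have hbdd : BddBelow {t : ℝ | 0 ≤ t ∧ 1 ≤ (c : ℝ≥0∞) * m (Set.Icc 0 t)} :=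
      ⟨0, fun t ht => ht.1⟩
    constructor
    · obtain ⟨v, hv, hvu, hlim⟩ := exists_seq_strictAnti_tendsto (uStar m c)
      have hI : Set.Icc 0 (uStar m c) = ⋂ n, Set.Icc 0 (v n) := by
        ext x
        simp only [Set.mem_Icc, Set.mem_iInter]
        constructor
        · intro h n
          exact ⟨h.1, h.2.trans (hvu n).le⟩
        · intro h
          exact ⟨(h 0).1, ge_of_tendsto' hlim fun n => (h n).2⟩
      have ht := tendsto_measure_iInter_atTop (μ := m) (s := fun n => Set.Icc 0 (v n))
        (fun n => measurableSet_Icc.nullMeasurableSet)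
        (fun i j hij => Set.Icc_subset_Icc_right (hv.antitone hij))
        ⟨0, measure_ne_top _ _⟩
      rw [← hI] at ht
      refine ge_of_tendsto' (ENNReal.Tendsto.const_mul ht (Or.inr ENNReal.coe_ne_top)) ?_
      intro n
      obtain ⟨t, hts, htv⟩ := exists_lt_of_csInf_lt hne (hvu n)
      refine hts.2.trans ?_
      simp only [Function.comp]
      gcongr
    · obtain ⟨v, hv, hvu, hlim⟩ := exists_seq_strictMono_tendsto (uStar m c)
      have hI : Set.Ico 0 (uStar m c) = ⋃ n, Set.Icc 0 (v n) := by
        ext x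
        simp only [Set.mem_Ico, Set.mem_Icc, Set.mem_iUnion]
        constructor
        · intro h
          obtain ⟨n, hn⟩ := (hlim.eventually (lt_mem_nhds h.2)).exists
          exact ⟨n, h.1, hn.le⟩
        · rintro ⟨n, h⟩
          exact ⟨h.1, h.2.trans_lt (hvu n)⟩
      have ht := tendsto_measure_iUnion_atTop (μ := m) (s := fun n => Set.Icc 0 (v n))
        (fun i j hij => Set.Icc_subset_Icc_right (hv.monotone hij))
      rw [← hI] at ht
      refine le_of_tendsto' (ENNReal.Tendsto.const_mul ht (Or.inr ENNReal.coe_ne_top)) ?_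
      intro n
      simp only [Function.comp]
      by_contra hcon
      push Not at hcon
      rcases le_or_gt 0 (v n) with h0 | h0
      · exact absurd (csInf_le hbdd ⟨h0, hcon.le⟩) (not_le.mpr (hvu n))
      · rw [Set.Icc_eq_empty (not_le.mpr h0)] at hcon
        simp at hcon
  have hu0 : 0 ≤ uStar m c := Real.sInf_nonneg fun t ht => ht.1
  have hform : ∀ I : Set ℝ, MeasurableSet I →
      ((c : ℝ≥0∞) • m.restrict (Set.Ico 0 (uStar m c))
        + (1 - (c : ℝ≥0∞) * m (Set.Ico 0 (uStar m c))) • Measure.dirac (uStar m c)) I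
        = (c : ℝ≥0∞) * m (I ∩ Set.Ico 0 (uStar m c))
          + (1 - (c : ℝ≥0∞) * m (Set.Ico 0 (uStar m c)))
            * Set.indicator I (fun _ => (1 : ℝ≥0∞)) (uStar m c) := by
    intro I hI
    rw [Measure.add_apply, Measure.smul_apply, Measure.smul_apply, Measure.restrict_apply hI,
      Measure.dirac_apply' _ hI]
    rfl
  refine ⟨⟨h1, h2⟩, ⟨?_⟩, hform, ?_⟩
  · rw [hform _ MeasurableSet.univ]
    simp only [Set.univ_inter, Set.indicator_univ, mul_one]
    exact add_tsub_cancel_of_le h2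
  · intro I hI
    rw [hform I hI]
    by_cases hu : uStar m c ∈ I
    · rw [Set.indicator_of_mem hu, mul_one]
      have hs : m (Set.Icc 0 (uStar m c)) = m (Set.Ico 0 (uStar m c)) + m {uStar m c} := by
        rw [← Set.Ico_union_right hu0]
        exact measure_union (by simp) (measurableSet_singleton _)
      have hd : 1 - (c : ℝ≥0∞) * m (Set.Ico 0 (uStar m c)) ≤ c * m {uStar m c} := by
        rw [tsub_le_iff_left, ← mul_add, ← hs]
        exact h1
      calc _ ≤ (c : ℝ≥0∞) * m (I ∩ Set.Ico 0 (uStar m c)) + c * m {uStar m c} := by gcongr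
        _ = c * m (I ∩ Set.Ico 0 (uStar m c) ∪ {uStar m c}) := by
          rw [← mul_add, measure_union (by simp) (measurableSet_singleton _)]
        _ ≤ c * m I := by
          gcongr
          exact Set.union_subset Set.inter_subset_left (Set.singleton_subset_iff.mpr hu)
    · rw [Set.indicator_of_notMem hu, mul_zero, add_zero]
      gcongr
      exact Set.inter_subset_left
end
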